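/- Let G be a finite minimal nonsupersoluble group in which every 3-maximal subgroup is K-𝔘-subnormal. Then the Frattini subgroup Φ(G^𝔘) of the supersoluble residual G^𝔘 has order 1 or a prime; more precisely, G^𝔘 is a Sylow t-subgroup of G for some prime t and |Φ(G^𝔘)| ≤ t. -/

import Mathlib

open Subgroup

/-- A finite group is supersoluble if it has a normal series, all of whose terms are
normal in the whole group, with cyclic factors. -/
def IsSupersoluble (G : Type*) [Group G] : Prop :=
  ∃ (n : ℕ) (c : Fin (n + 1) → Subgroup G) (hc : ∀ i, (c i).Normal),
    c 0 = ⊥ ∧ c (Fin.last n) = ⊤ ∧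
    ∀ i : Fin n, c i.castSucc ≤ c i.succ ∧
      haveI := (hc i.castSucc).subgroupOf (c i.succ)
      IsCyclic (↥(c i.succ) ⧸ ((c i.castSucc).subgroupOf (c i.succ)))

/-- `H` is a maximal subgroup of `K`, where `H ≤ K` are subgroups of a common group. -/
def IsMaximalIn {G : Type*} [Group G] (H K : Subgroup G) : Prop :=
  H ≤ K ∧ IsCoatom (H.subgroupOf K)

/-- The `n`-maximal subgroups of `G`: `0`-maximal is `G` itself, and an `(n+1)`-maximal
subgroup is a maximal subgroup of some `n`-maximal subgroup. -/
def IsNMaximal {G : Type*} [Group G] : ℕ → Subgroup G → Prop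
  | 0, H => H = ⊤
  | n + 1, H => ∃ K : Subgroup G, IsNMaximal n K ∧ IsMaximalIn H K

/-- `H` is `K`-`𝔘`-subnormal in `K`: there is a chain of subgroups
`H = H₀ ≤ H₁ ≤ ⋯ ≤ Hₜ = K` such that at each step either `H_{i-1}` is normal in `H_i`
or `H_i` modulo the core of `H_{i-1}` in `H_i` is supersoluble. -/
def IsKUSubnormalIn {G : Type*} [Group G] (H K : Subgroup G) : Prop :=
  ∃ (n : ℕ) (c : Fin (n + 1) → Subgroup G),
    c 0 = H ∧ c (Fin.last n) = K ∧
    ∀ i : Fin n, c i.castSucc ≤ c i.succ ∧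
      (((c i.castSucc).subgroupOf (c i.succ)).Normal ∨
        IsSupersoluble (↥(c i.succ) ⧸ ((c i.castSucc).subgroupOf (c i.succ)).normalCore))

/-- `H` is `K`-`𝔘`-subnormal in `G`. -/
def IsKUSubnormal {G : Type*} [Group G] (H : Subgroup G) : Prop :=
  IsKUSubnormalIn H ⊤

/-- `H` is `𝔘`-subnormal in `G`: there is a chain of subgroups
`H = H₀ ≤ H₁ ≤ ⋯ ≤ Hₙ = G` with `H_i` modulo the core of `H_{i-1}` in `H_i`
supersoluble at each step. -/
def IsUSubnormal {G : Type*} [Group G] (H : Subgroup G) : Prop :=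
  ∃ (n : ℕ) (c : Fin (n + 1) → Subgroup G),
    c 0 = H ∧ c (Fin.last n) = ⊤ ∧
    ∀ i : Fin n, c i.castSucc ≤ c i.succ ∧
      IsSupersoluble (↥(c i.succ) ⧸ ((c i.castSucc).subgroupOf (c i.succ)).normalCore)

/-- The supersoluble residual `G^𝔘` of `G`: the intersection of all normal subgroups `N`
of `G` with `G/N` supersoluble. -/
def ssResidual (G : Type*) [Group G] : Subgroup G :=
  ⨅ N ∈ {N : Subgroup G | ∃ hN : N.Normal, haveI := hN; IsSupersoluble (G ⧸ N)}, N

/-- `N` is a minimal normal subgroup of `G`. -/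
def IsMinimalNormal {G : Type*} [Group G] (N : Subgroup G) : Prop :=
  N.Normal ∧ N ≠ ⊥ ∧ ∀ M : Subgroup G, M.Normal → M ≤ N → M ≠ ⊥ → M = N

/-- `G` is minimal nonsupersoluble: not supersoluble, but all proper subgroups are. -/
def IsMinimalNonsupersoluble (G : Type*) [Group G] : Prop :=
  ¬ IsSupersoluble G ∧ ∀ H : Subgroup G, H ≠ ⊤ → IsSupersoluble H

/-- `G` is an `SDH`-group: minimal nonsupersoluble with `G^𝔘` a minimal normal subgroup. -/
def IsSDH (G : Type*) [Group G] : Prop :=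
  IsMinimalNonsupersoluble G ∧ IsMinimalNormal (ssResidual G)

/-- `H` is a Sylow `p`-subgroup of its ambient (finite) group. -/
def IsSylowSubgroup {G : Type*} [Group G] (p : ℕ) (H : Subgroup G) : Prop :=
  IsPGroup p H ∧ ¬ p ∣ H.index

/-- A finite group is Ore dispersive if, enumerating the prime divisors of `|G|`
in decreasing order as `p₁ > p₂ > ⋯ > pₙ`, for every `i` it has a normal subgroup of
order `p₁^{a₁} ⋯ p_i^{a_i}`. -/
def OreDispersive (G : Type*) [Group G] : Prop :=
  ∀ p : ℕ, p.Prime → ∃ N : Subgroup G, N.Normal ∧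
    Nat.card N =
      ∏ q ∈ (Nat.card G).primeFactors.filter (fun q => p ≤ q),
        q ^ (Nat.card G).factorization q

/-- `A/B` is a chief factor of `G`. -/
def IsChiefFactor {G : Type*} [Group G] (A B : Subgroup G) : Prop :=
  A.Normal ∧ B ≤ A ∧ ∃ hB : B.Normal,
    haveI := hB
    IsMinimalNormal (A.map (QuotientGroup.mk' B))

/-- The subgroups `H` and `K` of `G` are conjugate in `G`. -/
def ConjSubgroup {G : Type*} [Group G] (H K : Subgroup G) : Prop :=
  ∃ g : G, K = H.map (MulAut.conj g).toMonoidHom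

/-- The Frattini subgroup of a subgroup `H` of `G`, as a subgroup of `G`. -/
def frattiniIn {G : Type*} [Group G] (H : Subgroup G) : Subgroup G :=
  (frattini H).map H.subtype

/-- `G = P ⋊ (Q ⋊ R)` as an internal statement about subgroups `P`, `Q`, `R` of `G`. -/
def IsInternalSemidirect3 {G : Type*} [Group G] (P Q R : Subgroup G) : Prop :=
  P.Normal ∧ P ⊓ (Q ⊔ R) = ⊥ ∧ P ⊔ Q ⊔ R = ⊤ ∧
    (Q.subgroupOf (Q ⊔ R)).Normal ∧ Q ⊓ R = ⊥

/-- `G = P ⋊ (Q ⋊ (R ⋊ T))` as an internal statement about subgroups of `G`. -/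
def IsInternalSemidirect4 {G : Type*} [Group G] (P Q R T : Subgroup G) : Prop :=
  P.Normal ∧ P ⊓ (Q ⊔ R ⊔ T) = ⊥ ∧ P ⊔ Q ⊔ R ⊔ T = ⊤ ∧
    (Q.subgroupOf (Q ⊔ R ⊔ T)).Normal ∧ Q ⊓ (R ⊔ T) = ⊥ ∧
    (R.subgroupOf (R ⊔ T)).Normal ∧ R ⊓ T = ⊥

/-!
Solubility: let `R` be a maximal proper normal subgroup of `G`. A chain `⊥ < A < B < C < ⊤` in
`G ⧸ R` would give a proper `3`-maximal subgroup of `G` strictly above `R`. Being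
`K`-`𝔘`-subnormal, it lies in a proper normal subgroup, against the maximality of `R`, or in a
proper subgroup containing a normal subgroup `K` with `G ⧸ K` supersoluble; then `K` is itself
supersoluble, so `G` is soluble. Without such chains, a nonnormal Sylow subgroup of `G ⧸ R` for the
least prime is central in its normalizer, and Burnside's transfer theorem rules out that `G ⧸ R` is
nonabelian simple.

The residual: let `G ⧸ L` be a nonsupersoluble quotient of `G` all of whose proper quotients are
supersoluble. It has a unique minimal normal subgroup, which is a Sylow `t`-subgroup. A proper
subgroup of `G` cannot supplement `L`, so the Frattini argument shows that a Sylow `t`-subgroup `P`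
of `G` is normal, and then `P = G^𝔘`.

The bound: let `H` be a complement of `P`. In a soluble group no proper `K`-`𝔘`-subnormal subgroup
supplements `G^𝔘`, so `H` lies in no proper `3`-maximal subgroup. If `Φ(P)` is nontrivial, then
`H ⊔ Φ(P)` is proper, hence supersoluble, and it normalizes a subgroup `A ≤ Φ(P)` of prime order;
`A < Φ(P)` would give a chain `H < H ⊔ A < H ⊔ Φ(P) < G`, hence such a `3`-maximal subgroup.
-/

section GroupTheory

variable {G : Type*} [Group G]

lemma exists_castSucc_not_and_succ {n : ℕ} {p : Fin (n + 1) → Prop} (h₀ : ¬ p 0)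
    (hn : p (Fin.last n)) : ∃ i : Fin n, ¬ p i.castSucc ∧ p i.succ := by
  by_contra! h
  exact Fin.induction h₀ h (Fin.last n) hn

lemma isCyclic_quotient_subgroupOf_iff {A B : Subgroup G} (hAB : A ≤ B)
    [(A.subgroupOf B).Normal] :
    IsCyclic (B ⧸ A.subgroupOf B) ↔ ∃ g : G, B = zpowers g ⊔ A := by
  have lift_generator (b : B) :
      zpowers (QuotientGroup.mk' (A.subgroupOf B) b) = ⊤ ↔ B = zpowers (b : G) ⊔ A := by
    rw [← MonoidHom.map_zpowers, ← (comap_injective (QuotientGroup.mk'_surjective _)).eq_iff,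
      comap_map_eq, QuotientGroup.ker_mk', comap_top,
      ← (map_injective B.subtype_injective).eq_iff, Subgroup.map_sup, MonoidHom.map_zpowers,
      subgroupOf_map_subtype, inf_eq_left.2 hAB, ← MonoidHom.range_eq_map, range_subtype, eq_comm,
      subtype_apply]
  rw [isCyclic_iff_exists_zpowers_eq_top, (QuotientGroup.mk'_surjective _).exists]
  simp only [lift_generator, Subtype.exists, exists_prop]
  refine exists_congr fun g => and_iff_right_of_imp fun hB => ?_
  exact hB ▸ mem_sup_left (mem_zpowers g)

lemma normal_of_le_of_isCyclic {B C : Subgroup G} [C.Normal] [IsCyclic C] (hBC : B ≤ C) :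
    B.Normal := by
  obtain ⟨z, hz⟩ := C.isCyclic_iff_exists_zpowers_eq_top.1 ‹_›
  refine ⟨fun b hb g => ?_⟩
  obtain ⟨k, hk⟩ : g * z * g⁻¹ ∈ zpowers z :=
    hz ▸ ‹C.Normal›.conj_mem z (hz ▸ mem_zpowers z) g
  obtain ⟨m, rfl⟩ : b ∈ zpowers z := hz ▸ hBC hb
  simp only at hk
  rw [← conj_zpow, ← hk, ← zpow_mul, mul_comm, zpow_mul]
  exact zpow_mem hb k

lemma ne_bot_of_prime_card {A : Subgroup G} (hA : (Nat.card A).Prime) : A ≠ ⊥ :=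
  mt card_eq_one.2 hA.ne_one

lemma index_le_card_of_sup_eq_top [Finite G] {H N : Subgroup G} [N.Normal] (h : H ⊔ N = ⊤) :
    H.index ≤ Nat.card N := by
  refine Nat.card_le_card_of_surjective (fun n : N => ((n : G) : G ⧸ H)) fun x => ?_
  obtain ⟨y, rfl⟩ := QuotientGroup.mk_surjective x
  obtain ⟨n, hn, k, hk, rfl⟩ := mem_sup_of_normal_left.1 (sup_comm H N ▸ h ▸ mem_top y)
  exact ⟨⟨n, hn⟩, by simpa [QuotientGroup.eq] using hk⟩

lemma index_dvd_card_of_sup_eq_top {H K : Subgroup G} [K.Normal] (h : H ⊔ K = ⊤) :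
    K.index ∣ Nat.card H := by
  rw [← relIndex_top_right, ← h, relIndex_sup_right]
  exact relIndex_dvd_card K H

lemma le_sup_of_map_mk'_le {K A B : Subgroup G} [K.Normal]
    (h : A.map (QuotientGroup.mk' K) ≤ B.map (QuotientGroup.mk' K)) : A ≤ B ⊔ K := by
  rwa [map_le_iff_le_comap, comap_map_eq, QuotientGroup.ker_mk'] at h

lemma map_mk'_eq_bot_iff {K A : Subgroup G} [K.Normal] :
    A.map (QuotientGroup.mk' K) = ⊥ ↔ A ≤ K := by
  rw [Subgroup.map_eq_bot_iff, QuotientGroup.ker_mk']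

lemma normal_sup_of_normal_map_mk' {N A : Subgroup G} [N.Normal]
    (hA : (A.map (QuotientGroup.mk' N)).Normal) : (A ⊔ N).Normal := by
  simpa only [comap_map_eq, QuotientGroup.ker_mk'] using hA.comap (QuotientGroup.mk' N)

lemma sup_inf_eq_of_disjoint {P H A : Subgroup G} (hPH : Disjoint P H) (hAP : A ≤ P)
    (hHA : H ≤ normalizer (A : Set G)) : (H ⊔ A) ⊓ P = A := by
  apply SetLike.coe_injective
  rw [sup_comm, coe_inf, coe_mul_of_right_le_normalizer_left A H hHA, ← mul_inf_assoc A H P hAP,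
    inf_comm, hPH.eq_bot, coe_bot, Set.mul_singleton]
  simp only [mul_one, Set.image_id']

lemma sup_lt_sup_of_disjoint {P H A B : Subgroup G} (hPH : Disjoint P H) (hAB : A < B)
    (hBP : B ≤ P) (hHA : H ≤ normalizer (A : Set G)) : H ⊔ A < H ⊔ B := by
  refine lt_of_le_not_ge (sup_le_sup_left hAB.le H) fun h => hAB.not_ge ?_
  exact (le_inf (le_sup_right.trans h) hBP).trans
    (sup_inf_eq_of_disjoint hPH (hAB.le.trans hBP) hHA).le

lemma le_of_isPGroup_of_not_dvd_index {p : ℕ} [Fact p.Prime] {P K : Subgroup G} [K.Normal]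
    (hP : IsPGroup p P) (hK : ¬ p ∣ K.index) : P ≤ K := by
  rw [← map_mk'_eq_bot_iff, ← card_eq_one]
  exact (hP.map (QuotientGroup.mk' K)).card_eq_or_dvd.resolve_right fun h =>
    hK (h.trans (card_subgroup_dvd_card _))

lemma normalizer_sylow_sup_eq_top [Finite G] {N : Subgroup G} [N.Normal] {q : ℕ} [Fact q.Prime]
    {Q : Sylow q G} (hQ : ((Q : Subgroup G).map (QuotientGroup.mk' N)).Normal) :
    normalizer ((Q : Subgroup G) : Set G) ⊔ N = ⊤ := by
  have := normal_sup_of_normal_map_mk' hQ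
  have frattini_argument := Q.normalizer_sup_eq_top' (N := (Q : Subgroup G) ⊔ N) le_sup_left
  refine top_le_iff.1 (frattini_argument.ge.trans ?_)
  exact sup_le le_sup_left (sup_le_sup_right le_normalizer N)

lemma normal_sylow_of_le {q : ℕ} [Fact q.Prime] [Finite G] (Q : Sylow q G) {W : Subgroup G}
    [W.Normal] (hQW : (Q : Subgroup G) ≤ W) (hQ : (Q.subtype hQW : Subgroup W).Normal) :
    (Q : Subgroup G).Normal := by
  have := (Q.subtype hQW).characteristic_of_normal hQ
  have : ((Q.subtype hQW : Subgroup W).map W.subtype).Normal := inferInstance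
  rwa [Sylow.coe_subtype, subgroupOf_map_subtype, inf_eq_left.2 hQW] at this

lemma isSimpleGroup_quotient_of_maximal {R : Subgroup G} [R.Normal]
    (hR : Maximal (fun S : Subgroup G => S.Normal ∧ S ≠ ⊤) R) : IsSimpleGroup (G ⧸ R) := by
  have := QuotientGroup.nontrivial_iff.2 hR.prop.2
  refine ⟨fun N hN => or_iff_not_imp_right.2 fun hN_top => ?_⟩
  have hs := QuotientGroup.mk'_surjective R
  have hRN : R ≤ N.comap (QuotientGroup.mk' R) := by
    simpa only [QuotientGroup.ker_mk'] using ker_le_comap (QuotientGroup.mk' R) N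
  have hNR : N.comap (QuotientGroup.mk' R) ≤ R :=
    hR.le_of_ge ⟨hN.comap _, fun h => hN_top (comap_injective hs h)⟩ hRN
  rwa [← map_comap_eq_self_of_surjective hs N, map_mk'_eq_bot_iff]

lemma exists_normal_isCyclic_quotient [Finite G] [Group.IsSolvable G] {T : Subgroup G}
    [hT : T.Normal] (hT_top : T ≠ ⊤) :
    ∃ (S : Subgroup G) (_ : S.Normal), T ≤ S ∧ S ≠ ⊤ ∧ IsCyclic (G ⧸ S) := by
  obtain ⟨S, hTS, hS⟩ := Finite.exists_le_maximal
    (p := fun S : Subgroup G => S.Normal ∧ S ≠ ⊤) ⟨hT, hT_top⟩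
  have := hS.prop.1
  have := isSimpleGroup_quotient_of_maximal hS
  let : CommGroup (G ⧸ S) := { mul_comm := IsSimpleGroup.comm_iff_isSolvable.2 inferInstance }
  exact ⟨S, inferInstance, hTS, hS.prop.2, IsSimpleGroup.isCyclic⟩

lemma frattiniIn_lt [Finite G] {P : Subgroup G} (hP : P ≠ ⊥) : frattiniIn P < P := by
  refine lt_of_le_of_ne (map_subtype_le _) fun h => hP ?_
  have frattini_eq_top : frattini P = ⊤ := by
    rw [← (map_injective P.subtype_injective).eq_iff, ← MonoidHom.range_eq_map, range_subtype]
    exact h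
  have bot_eq_top : (⊥ : Subgroup P) = ⊤ :=
    frattini_nongenerating (by rw [frattini_eq_top, sup_top_eq])
  simpa only [Subgroup.map_bot, ← MonoidHom.range_eq_map, range_subtype, eq_comm (a := ⊥)] using
    congrArg (Subgroup.map P.subtype) bot_eq_top

end GroupTheory

section Supersoluble

variable {G : Type*} [Group G]

lemma isSupersoluble_iff : IsSupersoluble G ↔
    ∃ (n : ℕ) (c : Fin (n + 1) → Subgroup G), (∀ i, (c i).Normal) ∧ c 0 = ⊥ ∧
      c (Fin.last n) = ⊤ ∧ ∀ i : Fin n, ∃ g : G, c i.succ = zpowers g ⊔ c i.castSucc := by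
  constructor
  · rintro ⟨n, c, hc, h_bot, h_top, hstep⟩
    refine ⟨n, c, hc, h_bot, h_top, fun i => ?_⟩
    have := (hc i.castSucc).subgroupOf (c i.succ)
    exact (isCyclic_quotient_subgroupOf_iff (hstep i).1).1 (hstep i).2
  · rintro ⟨n, c, hc, h_bot, h_top, hstep⟩
    have hle (i : Fin n) : c i.castSucc ≤ c i.succ := by
      obtain ⟨g, hg⟩ := hstep i
      exact hg ▸ le_sup_right
    refine ⟨n, c, hc, h_bot, h_top, fun i => ⟨hle i, ?_⟩⟩
    have := (hc i.castSucc).subgroupOf (c i.succ)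
    exact (isCyclic_quotient_subgroupOf_iff (hle i)).2 (hstep i)

lemma IsSupersoluble.of_surjective {Y : Type*} [Group Y] (h : IsSupersoluble G) {f : G →* Y}
    (hf : Function.Surjective f) : IsSupersoluble Y := by
  obtain ⟨n, c, hc, h_bot, h_top, hstep⟩ := isSupersoluble_iff.1 h
  refine isSupersoluble_iff.2 ⟨n, fun i => (c i).map f, fun i => (hc i).map f hf, by
    simp only [h_bot, Subgroup.map_bot], by simp only [h_top, map_top_of_surjective f hf],
    fun i => ?_⟩
  obtain ⟨g, hg⟩ := hstep i
  exact ⟨f g, by simp only [hg, Subgroup.map_sup, MonoidHom.map_zpowers]⟩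

lemma IsSupersoluble.of_quotient {K : Subgroup G} [K.Normal] [hK : IsCyclic K]
    (h : IsSupersoluble (G ⧸ K)) : IsSupersoluble G := by
  obtain ⟨n, c, hc, h_bot, h_top, hstep⟩ := isSupersoluble_iff.1 h
  refine isSupersoluble_iff.2 ⟨n + 1, Fin.cons ⊥ fun i => (c i).comap (QuotientGroup.mk' K),
    Fin.cases (inferInstanceAs (⊥ : Subgroup G).Normal) fun i => (hc i).comap _, rfl, ?_,
    Fin.cases ?_ fun i => ?_⟩
  · rw [← Fin.succ_last, Fin.cons_succ, h_top, comap_top]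
  · obtain ⟨g, hg⟩ := K.isCyclic_iff_exists_zpowers_eq_top.1 hK
    exact ⟨g, by simp only [Fin.castSucc_zero, Fin.cons_zero, Fin.cons_succ, h_bot,
      MonoidHom.comap_bot, QuotientGroup.ker_mk', sup_bot_eq, hg]⟩
  · obtain ⟨g, hg⟩ := hstep i
    obtain ⟨g, rfl⟩ := QuotientGroup.mk'_surjective K g
    have hK_le : K ≤ (c i.castSucc).comap (QuotientGroup.mk' K) := by
      simpa only [QuotientGroup.ker_mk'] using ker_le_comap (QuotientGroup.mk' K) (c i.castSucc)
    refine ⟨g, ?_⟩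
    rw [Fin.castSucc_succ, Fin.cons_succ, Fin.cons_succ, hg, ← MonoidHom.map_zpowers,
      ← comap_sup_eq _ _ _ (QuotientGroup.mk'_surjective K), comap_map_eq, QuotientGroup.ker_mk',
      sup_assoc, sup_eq_right.2 hK_le]

lemma IsSupersoluble.of_subsingleton [Subsingleton G] : IsSupersoluble G :=
  isSupersoluble_iff.2 ⟨0, fun _ => ⊥, fun _ => inferInstance, rfl, Subsingleton.elim _ _,
    fun i => i.elim0⟩

lemma IsSupersoluble.of_isCyclic [IsCyclic G] : IsSupersoluble G :=
  have : Subsingleton (G ⧸ (⊤ : Subgroup G)) := QuotientGroup.subsingleton_quotient_top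
  .of_quotient (K := ⊤) .of_subsingleton

lemma IsSupersoluble.isSolvable (h : IsSupersoluble G) : Group.IsSolvable G := by
  obtain ⟨n, c, hc, h_bot, h_top, hstep⟩ := h
  have isSolvable_term (i : Fin (n + 1)) : Group.IsSolvable (c i) := by
    induction i using Fin.induction with
    | zero => rw [h_bot]; infer_instance
    | succ i ih =>
      obtain ⟨hle, hcyc⟩ := hstep i
      have := (hc i.castSucc).subgroupOf (c i.succ)
      have := hcyc.isMulCommutative
      have : Group.IsSolvable (c i.succ ⧸ (c i.castSucc).subgroupOf (c i.succ)) :=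
        Group.isSolvable_of_comm mul_comm'
      refine Group.isSolvable_of_ker_le_range (inclusion hle)
        (QuotientGroup.mk' ((c i.castSucc).subgroupOf (c i.succ))) ?_
      rw [QuotientGroup.ker_mk', inclusion_range]
  have : Group.IsSolvable (⊤ : Subgroup G) := h_top ▸ isSolvable_term (Fin.last n)
  exact Group.isSolvable_of_surjective (f := (⊤ : Subgroup G).subtype) fun x => ⟨⟨x, trivial⟩, rfl⟩

lemma IsSupersoluble.quotient_of_sup_eq_top {T K : Subgroup G} [K.Normal] (hT : IsSupersoluble T)
    (h : T ⊔ K = ⊤) : IsSupersoluble (G ⧸ K) := by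
  refine hT.of_surjective (f := (QuotientGroup.mk' K).comp T.subtype) ?_
  rw [← MonoidHom.range_eq_top, MonoidHom.range_comp, range_subtype,
    ← (comap_injective (QuotientGroup.mk'_surjective K)).eq_iff, comap_map_eq,
    QuotientGroup.ker_mk', h, comap_top]

lemma IsSupersoluble.exists_normal_isCyclic_le {Y : Type*} [Group Y] (hY : IsSupersoluble Y)
    (f : G →* Y) {N : Subgroup G} [N.Normal] (hN : N ≠ ⊥) (hfN : Disjoint f.ker N) :
    ∃ C : Subgroup G, ∃ _ : C.Normal, ∃ _ : IsCyclic C, C ≤ N ∧ C ≠ ⊥ := by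
  obtain ⟨n, c, hc, h_bot, h_top, hstep⟩ := hY
  obtain ⟨i, hi, hi'⟩ := exists_castSucc_not_and_succ (p := fun i => (c i).comap f ⊓ N ≠ ⊥)
    (by rw [h_bot, MonoidHom.comap_bot, not_not]; exact hfN.eq_bot)
    (by rwa [h_top, comap_top, top_inf_eq])
  have := hc i.succ
  have := (hc i.castSucc).subgroupOf (c i.succ)
  have := (hstep i).2
  refine ⟨(c i.succ).comap f ⊓ N, inferInstance, ?_, inf_le_right, hi'⟩
  refine isCyclic_of_injective ((QuotientGroup.mk' ((c i.castSucc).subgroupOf (c i.succ))).comp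
    ((f.comp (Subgroup.subtype _)).codRestrict (c i.succ) fun x => x.2.1)) ?_
  rw [injective_iff_map_eq_one]
  intro x hx
  simp only [MonoidHom.comp_apply, QuotientGroup.mk'_apply, QuotientGroup.eq_one_iff,
    mem_subgroupOf] at hx
  have hx_mem : (x : G) ∈ (c i.castSucc).comap f ⊓ N := ⟨hx, x.2.2⟩
  rw [not_not.1 hi, mem_bot] at hx_mem
  exact Subtype.ext hx_mem

lemma IsSupersoluble.exists_normal_prime_card_le [Finite G] {Y : Type*} [Group Y]
    (hY : IsSupersoluble Y) (f : G →* Y) {N : Subgroup G} [N.Normal] (hN : N ≠ ⊥)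
    (hfN : Disjoint f.ker N) :
    ∃ A : Subgroup G, A.Normal ∧ A ≤ N ∧ (Nat.card A).Prime := by
  obtain ⟨C, _, _, hCN, hC⟩ := hY.exists_normal_isCyclic_le f hN hfN
  obtain ⟨p, hp, hpC⟩ := Nat.exists_prime_and_dvd (mt card_eq_one.1 hC)
  have := Fact.mk hp
  obtain ⟨x, hx⟩ := exists_prime_orderOf_dvd_card' p hpC
  have hxC : zpowers (x : G) ≤ C := zpowers_le.2 x.2
  refine ⟨zpowers (x : G), normal_of_le_of_isCyclic hxC, hxC.trans hCN, ?_⟩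
  rwa [Nat.card_zpowers, Subgroup.orderOf_coe, hx]

lemma IsSupersoluble.exists_prime_card_le_normalizer [Finite G] {W N : Subgroup G}
    (hW : IsSupersoluble W) [N.Normal] (hNW : N ≤ W) (hN : N ≠ ⊥) :
    ∃ A ≤ N, (Nat.card A).Prime ∧ W ≤ normalizer (A : Set G) := by
  obtain ⟨A, hA, hAN, hA_prime⟩ := hW.exists_normal_prime_card_le (MonoidHom.id W)
    (N := N.subgroupOf W) (mt subgroupOf_eq_bot.1 fun h => hN (h.mono_right hNW |>.eq_bot_of_self))
    (by simp only [MonoidHom.ker_id, disjoint_bot_left])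
  refine ⟨A.map W.subtype, ?_, ?_, ?_⟩
  · exact map_le_iff_le_comap.2 hAN
  · rwa [card_map_of_injective W.subtype_injective]
  · have := le_normalizer_map (H := A) W.subtype
    rwa [normalizer_eq_top, ← MonoidHom.range_eq_map, range_subtype] at this

lemma IsSupersoluble.sylow_normal [Finite G] (hG : IsSupersoluble G) {q : ℕ} [Fact q.Prime]
    (hq : ∀ p ∈ (Nat.card G).primeFactors, p ≤ q) (Q : Sylow q G) : (Q : Subgroup G).Normal := by
  induction hn : Nat.card G using Nat.strong_induction_on generalizing G with
  | _ n ih =>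
  obtain h | h := subsingleton_or_nontrivial G
  · rw [Subsingleton.elim (Q : Subgroup G) ⊥]
    infer_instance
  obtain ⟨A, _, -, hA⟩ := hG.exists_normal_prime_card_le (MonoidHom.id G) (N := ⊤) top_ne_bot
    (by simp only [MonoidHom.ker_id, disjoint_bot_left])
  have hs := QuotientGroup.mk'_surjective A
  have hcard := card_eq_card_quotient_mul_card_subgroup A
  have hQA : ((Q : Subgroup G).map (QuotientGroup.mk' A)).Normal := by
    refine ih (Nat.card (G ⧸ A)) ?_ (hG.of_surjective hs) ?_ (Q.mapSurjective hs) rfl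
    · rw [← hn, hcard]
      exact lt_mul_of_one_lt_right Nat.card_pos hA.one_lt
    · exact fun p hp => hq p (Nat.primeFactors_mono (hcard ▸ dvd_mul_right _ _) Nat.card_pos.ne' hp)
  have card_sylow_le : Nat.card (Sylow q G) ≤ q := by
    rw [Q.card_eq_index_normalizer]
    exact (index_le_card_of_sup_eq_top (normalizer_sylow_sup_eq_top hQA)).trans
      (hq _ (hA.mem_primeFactors (card_subgroup_dvd_card A) Nat.card_pos.ne'))
  have card_sylow_eq_one : Nat.card (Sylow q G) = 1 := by
    have hpos : 0 < Nat.card (Sylow q G) := Nat.card_pos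
    have := Nat.eq_zero_of_dvd_of_lt ((Nat.modEq_iff_dvd' hpos).1 (card_sylow_modEq_one q G).symm)
      (by omega)
    omega
  rw [Q.card_eq_index_normalizer, index_eq_one] at card_sylow_eq_one
  exact normalizer_eq_top_iff.1 card_sylow_eq_one

end Supersoluble

section Residual

variable {G : Type*} [Group G]

lemma le_ssResidual_iff {A : Subgroup G} :
    A ≤ ssResidual G ↔ ∀ (K : Subgroup G) [K.Normal], IsSupersoluble (G ⧸ K) → A ≤ K := by
  simp only [ssResidual, le_iInf_iff, Set.mem_ofPred_eq, forall_exists_index]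

lemma ssResidual_le {K : Subgroup G} [K.Normal] (hK : IsSupersoluble (G ⧸ K)) :
    ssResidual G ≤ K :=
  le_ssResidual_iff.1 le_rfl K hK

instance normal_ssResidual : (ssResidual G).Normal := by
  refine normal_iInf_normal fun K => normal_iInf_normal ?_
  rintro ⟨hK, -⟩
  exact hK

end Residual

section MinimalNormal

variable {G : Type*} [Group G] {N : Subgroup G}

lemma exists_isMinimalNormal [Finite G] [Nontrivial G] : ∃ N : Subgroup G, IsMinimalNormal N := by
  obtain ⟨N, -, hN⟩ := Finite.exists_le_minimal
    (p := fun N : Subgroup G => N.Normal ∧ N ≠ ⊥) (a := ⊤) ⟨inferInstance, top_ne_bot⟩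
  exact ⟨N, hN.prop.1, hN.prop.2, fun M hM hMN hM_bot =>
    hMN.antisymm (hN.le_of_le ⟨hM, hM_bot⟩ hMN)⟩

lemma IsMinimalNormal.eq_bot_or_eq_top_of_characteristic (hN : IsMinimalNormal N) {C : Subgroup N}
    [C.Characteristic] : C = ⊥ ∨ C = ⊤ := by
  have := hN.1
  refine or_iff_not_imp_left.2 fun hC => map_injective N.subtype_injective ?_
  rw [← MonoidHom.range_eq_map, range_subtype]
  exact hN.2.2 _ inferInstance (map_subtype_le C)
    (mt (map_eq_bot_iff_of_injective C N.subtype_injective).1 hC)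

lemma IsMinimalNormal.exists_isPGroup [Finite G] [Group.IsSolvable N] (hN : IsMinimalNormal N) :
    ∃ p, p.Prime ∧ IsPGroup p N := by
  have := N.nontrivial_iff_ne_bot.2 hN.2.1
  have commutator_eq_bot : commutator N = ⊥ :=
    hN.eq_bot_or_eq_top_of_characteristic.resolve_right
      (Group.IsSolvable.commutator_lt_top_of_nontrivial N).ne
  have := (commutator_eq_bot_iff N).1 commutator_eq_bot
  obtain ⟨p, hp, hpN⟩ := Nat.exists_prime_and_dvd (mt card_eq_one.1 hN.2.1)
  have := Fact.mk hp
  obtain ⟨S⟩ : Nonempty (Sylow p N) := inferInstance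
  have := S.characteristic_of_normal (normal_of_isMulCommutative _)
  have hS : (S : Subgroup N) = ⊤ :=
    hN.eq_bot_or_eq_top_of_characteristic.resolve_left (S.ne_bot_of_dvd_card hpN)
  exact ⟨p, hp, (hS ▸ S.2 : IsPGroup p (⊤ : Subgroup N)).of_equiv topEquiv⟩

lemma IsMinimalNormal.le_of_isSupersoluble_quotient [Finite G] (hN : IsMinimalNormal N)
    (hN_card : ¬ (Nat.card N).Prime) {K : Subgroup G} [K.Normal] (hK : IsSupersoluble (G ⧸ K)) :
    N ≤ K := by
  have := hN.1
  by_contra hNK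
  have hdisj : Disjoint K N := by
    rw [disjoint_iff]
    by_contra hKN
    exact hNK (inf_eq_right.1 (hN.2.2 _ inferInstance inf_le_right hKN))
  obtain ⟨A, hA, hAN, hA_prime⟩ := hK.exists_normal_prime_card_le (QuotientGroup.mk' K) hN.2.1
    (by rwa [QuotientGroup.ker_mk'])
  exact hN_card (hN.2.2 A hA hAN (ne_bot_of_prime_card hA_prime) ▸ hA_prime)

lemma not_prime_card_of_isSupersoluble_quotient [N.Normal] (hG : ¬ IsSupersoluble G)
    (hN : IsSupersoluble (G ⧸ N)) : ¬ (Nat.card N).Prime := fun hN_prime =>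
  have := Fact.mk hN_prime
  have := isCyclic_of_prime_card (α := N) rfl
  hG hN.of_quotient

end MinimalNormal

section Monolithic

variable {G : Type*} [Group G] [Finite G] {N : Subgroup G}

lemma IsMinimalNonsupersoluble.exists_normal_sylow {r : ℕ} [Fact r.Prime]
    (hG : IsMinimalNonsupersoluble G)
    (hN : IsMinimalNormal N) (hN_le : ∀ K : Subgroup G, K.Normal → K ≠ ⊥ → N ≤ K)
    (hN_quot : haveI := hN.1; IsSupersoluble (G ⧸ N)) (hr : IsPGroup r N) :
    ∃ R : Sylow r G, (R : Subgroup G).Normal := by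
  have := hN.1
  have hG_card : (Nat.card G).primeFactors.Nonempty := by
    have : Nontrivial G := not_subsingleton_iff_nontrivial.1 fun _ => hG.1 .of_subsingleton
    exact Nat.nonempty_primeFactors.2 Finite.one_lt_card
  obtain ⟨q, hq, hq_max⟩ := Finset.exists_max_image _ id hG_card
  have hq_max_of_dvd {m : ℕ} (hm : m ∣ Nat.card G) (p) (hp : p ∈ m.primeFactors) : p ≤ q :=
    hq_max p (Nat.primeFactors_mono hm Nat.card_pos.ne' hp)
  have := Fact.mk (Nat.prime_of_mem_primeFactors hq)
  obtain ⟨Q⟩ : Nonempty (Sylow q G) := inferInstance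
  have hQN : ((Q : Subgroup G).map (QuotientGroup.mk' N)).Normal :=
    hN_quot.sylow_normal (hq_max_of_dvd (card_quotient_dvd_card N))
      (Q.mapSurjective (QuotientGroup.mk'_surjective N))
  obtain rfl | hqr := eq_or_ne q r
  · have hQ := normalizer_sylow_sup_eq_top hQN
    rw [sup_eq_left.2 ((hr.le_sylow_of_normal Q).trans le_normalizer)] at hQ
    exact ⟨Q, normalizer_eq_top_iff.1 hQ⟩
  have hQ : ¬ (Q : Subgroup G).Normal := fun hQ =>
    hN.2.1 ((Q.2.disjoint_of_ne q r hqr Q N hr).symm.eq_bot_of_le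
      (hN_le Q hQ (Q.ne_bot_of_dvd_card (Nat.dvd_of_mem_primeFactors hq))))
  have hQN_top : (Q : Subgroup G) ⊔ N = ⊤ := by
    have := normal_sup_of_normal_map_mk' hQN
    by_contra hQN_top
    refine hQ (normal_sylow_of_le Q (W := (Q : Subgroup G) ⊔ N) le_sup_left ?_)
    exact (hG.2 _ hQN_top).sylow_normal (hq_max_of_dvd (card_subgroup_dvd_card _)) _
  refine ⟨hr.toSylow fun hrN => hqr ?_, hN.1⟩
  obtain ⟨k, hk⟩ := Q.2.exists_card_eq
  have hrQ := hrN.trans (index_dvd_card_of_sup_eq_top hQN_top)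
  rw [hk] at hrQ
  have hrq : r ∣ q := Nat.Prime.dvd_of_dvd_pow Fact.out hrQ
  exact ((Nat.prime_dvd_prime_iff_eq Fact.out Fact.out).1 hrq).symm

lemma IsMinimalNonsupersoluble.eq_normal_sylow {r : ℕ} [Fact r.Prime]
    (hG : IsMinimalNonsupersoluble G)
    (hN : IsMinimalNormal N) (hN_le : ∀ K : Subgroup G, K.Normal → K ≠ ⊥ → N ≤ K)
    (hN_card : ¬ (Nat.card N).Prime) {R : Sylow r G} (hR : (R : Subgroup G).Normal)
    (hNR : N ≤ R) : N = R := by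
  have := hN.1
  by_contra hne
  have : Nontrivial R := nontrivial_iff_ne_bot _ |>.2 fun h => hN.2.1 (le_bot_iff.1 (h ▸ hNR))
  have hN_center : N ≤ (center R).map (R : Subgroup G).subtype :=
    hN_le _ inferInstance (mt (map_eq_bot_iff_of_injective _ (subtype_injective _)).1
      R.2.bot_lt_center.ne')
  obtain ⟨H, hH⟩ := exists_right_complement'_of_coprime R.card_coprime_index
  have hHN : H ⊔ N < ⊤ := by
    rw [← hH.symm.sup_eq_top]
    exact sup_lt_sup_of_disjoint hH.disjoint (hNR.lt_of_ne hne) le_rfl le_normalizer_of_normal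
  obtain ⟨A, hAN, hA_prime, hA_norm⟩ :=
    (hG.2 _ hHN.ne).exists_prime_card_le_normalizer le_sup_right hN.2.1
  have hRA : (R : Subgroup G) ≤ normalizer (A : Set G) := by
    refine le_trans (b := centralizer (A : Set G)) (fun x hx y hy => ?_)
      (centralizer_le_normalizer _)
    obtain ⟨z, hz, rfl⟩ := hN_center (hAN hy)
    exact congrArg Subtype.val (mem_center_iff.1 hz ⟨x, hx⟩).symm
  have hA : A.Normal := by
    rw [← normalizer_eq_top_iff, ← top_le_iff, ← hH.sup_eq_top]
    exact sup_le hRA (le_sup_left.trans hA_norm)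
  exact hN_card (hN.2.2 A hA hAN (ne_bot_of_prime_card hA_prime) ▸ hA_prime)

lemma IsMinimalNonsupersoluble.exists_isMinimalNormal_sylow [Group.IsSolvable G]
    (hG : IsMinimalNonsupersoluble G)
    (hquot : ∀ (K : Subgroup G) [K.Normal], K ≠ ⊥ → IsSupersoluble (G ⧸ K)) :
    ∃ (r : ℕ) (_ : Fact r.Prime) (R : Sylow r G),
      IsMinimalNormal (R : Subgroup G) ∧ (R : Subgroup G) ≤ ssResidual G := by
  have : Nontrivial G := not_subsingleton_iff_nontrivial.1 fun _ => hG.1 .of_subsingleton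
  obtain ⟨N, hN⟩ := exists_isMinimalNormal (G := G)
  have := hN.1
  have hN_quot := hquot N hN.2.1
  have hN_card := not_prime_card_of_isSupersoluble_quotient hG.1 hN_quot
  have hN_le (K : Subgroup G) [K.Normal] : IsSupersoluble (G ⧸ K) → N ≤ K :=
    hN.le_of_isSupersoluble_quotient hN_card
  have hN_le' (K : Subgroup G) (_ : K.Normal) (hK : K ≠ ⊥) : N ≤ K := hN_le K (hquot K hK)
  obtain ⟨r, hr, hNr⟩ := hN.exists_isPGroup
  have := Fact.mk hr
  obtain ⟨R, hR⟩ := hG.exists_normal_sylow hN hN_le' hN_quot hNr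
  obtain rfl := hG.eq_normal_sylow hN hN_le' hN_card hR (hNr.le_sylow_of_normal R)
  exact ⟨r, inferInstance, R, hN, le_ssResidual_iff.2 hN_le⟩

end Monolithic

section MinimalNonsupersoluble

variable {G : Type*} [Group G]

lemma IsMinimalNonsupersoluble.eq_top_of_sup_eq_top (hG : IsMinimalNonsupersoluble G)
    {L T : Subgroup G} [L.Normal] (hL : ¬ IsSupersoluble (G ⧸ L)) (hT : T ⊔ L = ⊤) : T = ⊤ :=
  of_not_not fun hT_top => hL ((hG.2 T hT_top).quotient_of_sup_eq_top hT)

lemma IsMinimalNonsupersoluble.quotient (hG : IsMinimalNonsupersoluble G) {L : Subgroup G}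
    [L.Normal] (hL : ¬ IsSupersoluble (G ⧸ L)) : IsMinimalNonsupersoluble (G ⧸ L) := by
  have hs := QuotientGroup.mk'_surjective L
  refine ⟨hL, fun A hA => ?_⟩
  have hA_comap : A.comap (QuotientGroup.mk' L) ≠ ⊤ := fun h => hA (comap_injective hs h)
  exact (hG.2 _ hA_comap).of_surjective
    (MonoidHom.subgroupComap_surjective_of_surjective (QuotientGroup.mk' L) A hs)

lemma IsMinimalNonsupersoluble.isSolvable_of_quotient (hG : IsMinimalNonsupersoluble G)
    {K : Subgroup G} [K.Normal] (hK_top : K ≠ ⊤) (hK : Group.IsSolvable (G ⧸ K)) :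
    Group.IsSolvable G :=
  have := (hG.2 K hK_top).isSolvable
  Group.isSolvable_of_ker_le_range K.subtype (QuotientGroup.mk' K)
    (by rw [QuotientGroup.ker_mk', range_subtype])

lemma exists_not_isSupersoluble_quotient [Finite G] (hG : ¬ IsSupersoluble G) :
    ∃ (L : Subgroup G) (_ : L.Normal), ¬ IsSupersoluble (G ⧸ L) ∧
      ∀ (K : Subgroup (G ⧸ L)) [K.Normal], K ≠ ⊥ → IsSupersoluble ((G ⧸ L) ⧸ K) := by
  obtain ⟨L, -, hL⟩ := Finite.exists_le_maximal
    (p := fun L : Subgroup G => ∃ _ : L.Normal, ¬ IsSupersoluble (G ⧸ L)) (a := ⊥)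
    ⟨inferInstance, fun h => hG (h.of_surjective
      (f := (QuotientGroup.quotientBot (G := G)).toMonoidHom) QuotientGroup.quotientBot.surjective)⟩
  obtain ⟨_, hL_not⟩ := hL.prop
  refine ⟨L, inferInstance, hL_not, fun K _ hK => ?_⟩
  have hs := QuotientGroup.mk'_surjective L
  have hLK : L ≤ K.comap (QuotientGroup.mk' L) := by
    simpa only [QuotientGroup.ker_mk'] using ker_le_comap (QuotientGroup.mk' L) K
  have hK_comap : IsSupersoluble (G ⧸ K.comap (QuotientGroup.mk' L)) := by
    by_contra h
    rw [← map_comap_eq_self_of_surjective hs K, Ne, map_mk'_eq_bot_iff] at hK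
    exact hK (hL.le_of_ge ⟨inferInstance, h⟩ hLK)
  exact hK_comap.of_surjective (QuotientGroup.map_surjective_of_surjective _ K
    (QuotientGroup.mk' L) ((QuotientGroup.mk'_surjective K).comp hs) le_rfl)

lemma ssResidual_le_map {Y : Type*} [Group Y] {f : G →* Y} (hf : Function.Surjective f)
    {K : Subgroup G} [hK_normal : K.Normal] (hK : IsSupersoluble (G ⧸ K)) :
    ssResidual Y ≤ K.map f := by
  have := hK_normal.map f hf
  exact ssResidual_le (hK.of_surjective (QuotientGroup.map_surjective_of_surjective K _ f
    ((QuotientGroup.mk'_surjective _).comp hf) (le_comap_map f K)))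

lemma IsMinimalNonsupersoluble.exists_sylow_eq_ssResidual [Finite G] [Group.IsSolvable G]
    (hG : IsMinimalNonsupersoluble G) :
    ∃ (t : ℕ) (_ : Fact t.Prime) (P : Sylow t G), (P : Subgroup G) = ssResidual G := by
  obtain ⟨L, _, hL, hquot⟩ := exists_not_isSupersoluble_quotient hG.1
  obtain ⟨t, _, R, hR, hR_le⟩ := (hG.quotient hL).exists_isMinimalNormal_sylow hquot
  have hs := QuotientGroup.mk'_surjective L
  obtain ⟨P⟩ : Nonempty (Sylow t G) := inferInstance
  have := hR.1
  have hPR : (P : Subgroup G).map (QuotientGroup.mk' L) = R :=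
    R.is_maximal' (P.mapSurjective hs).2 (R.2.le_sylow_of_normal (P.mapSurjective hs))
  have hP : (P : Subgroup G).Normal :=
    normalizer_eq_top_iff.1 (hG.eq_top_of_sup_eq_top hL
      (normalizer_sylow_sup_eq_top (hPR ▸ hR.1)))
  obtain ⟨H, hH⟩ := exists_right_complement'_of_coprime P.card_coprime_index
  have hH_top : H ≠ ⊤ := by
    rintro rfl
    rw [isComplement'_top_right.1 hH, Subgroup.map_bot] at hPR
    exact hR.2.1 hPR.symm
  have hHP : H ⊔ P = ⊤ := hH.symm.sup_eq_top
  refine ⟨t, inferInstance, P, le_antisymm (le_ssResidual_iff.2 fun K _ hK => ?_)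
    (ssResidual_le ((hG.2 H hH_top).quotient_of_sup_eq_top hHP))⟩
  have hPKL : (P : Subgroup G) ≤ K ⊔ L :=
    le_sup_of_map_mk'_le (hPR.le.trans (hR_le.trans (ssResidual_le_map hs hK)))
  have hHK : H ⊔ K = ⊤ := by
    refine hG.eq_top_of_sup_eq_top hL (top_le_iff.1 ?_)
    rw [← hHP, sup_assoc]
    exact sup_le_sup_left hPKL H
  refine le_of_isPGroup_of_not_dvd_index P.2 fun htK => P.not_dvd_index ?_
  rw [hH.symm.index_eq_card]
  exact htK.trans (index_dvd_card_of_sup_eq_top hHK)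

end MinimalNonsupersoluble

section MaximalChains

variable {G : Type*} [Group G]

lemma IsMaximalIn.lt {H K : Subgroup G} (h : IsMaximalIn H K) : H < K :=
  h.1.lt_of_not_ge (mt subgroupOf_eq_top.2 h.2.1)

lemma exists_isMaximalIn_ge [Finite G] {B K : Subgroup G} (h : B < K) :
    ∃ M, B ≤ M ∧ IsMaximalIn M K := by
  obtain ⟨M, hM, hBM⟩ := (eq_top_or_exists_le_coatom (B.subgroupOf K)).resolve_left
    (mt subgroupOf_eq_top.1 h.not_ge)
  refine ⟨M.map K.subtype, fun b hb => ⟨⟨b, h.le hb⟩, hBM hb, rfl⟩, map_subtype_le M, ?_⟩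
  rwa [subgroupOf, comap_map_eq_self_of_injective K.subtype_injective]

lemma IsNMaximal.exists_succ_ge [Finite G] {n : ℕ} {B K : Subgroup G} (hK : IsNMaximal n K)
    (hBK : B < K) : ∃ M, B ≤ M ∧ M < K ∧ IsNMaximal (n + 1) M := by
  obtain ⟨M, hBM, hM⟩ := exists_isMaximalIn_ge hBK
  exact ⟨M, hBM, hM.lt, K, hK, hM⟩

lemma exists_isNMaximal_three_ge [Finite G] {A B C : Subgroup G} (hAB : A < B) (hBC : B < C)
    (hC : C < ⊤) : ∃ H, A ≤ H ∧ H ≠ ⊤ ∧ IsNMaximal 3 H := by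
  obtain ⟨M₁, hCM₁, hM₁_lt, hM₁⟩ := IsNMaximal.exists_succ_ge (n := 0) rfl hC
  obtain ⟨M₂, hBM₂, hM₂_lt, hM₂⟩ := hM₁.exists_succ_ge (hBC.trans_le hCM₁)
  obtain ⟨M₃, hAM₃, hM₃_lt, hM₃⟩ := hM₂.exists_succ_ge (hAB.trans_le hBM₂)
  exact ⟨M₃, hAM₃, (hM₃_lt.trans (hM₂_lt.trans hM₁_lt)).ne, hM₃⟩

lemma IsKUSubnormal.exists_ge {H : Subgroup G} (h : IsKUSubnormal H) (hH : H ≠ ⊤) :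
    ∃ T : Subgroup G, H ≤ T ∧ T ≠ ⊤ ∧
      (T.Normal ∨ ∃ (K : Subgroup G) (_ : K.Normal), K ≤ T ∧ IsSupersoluble (G ⧸ K)) := by
  obtain ⟨n, c, h_first, h_last, hstep⟩ := h
  have hH_le (i : Fin (n + 1)) : H ≤ c i :=
    i.induction h_first.ge fun i hi => hi.trans (hstep i).1
  obtain ⟨i, hi, hi_succ⟩ := exists_castSucc_not_and_succ (p := fun i => c i = ⊤)
    (by rwa [h_first]) h_last
  refine ⟨c i.castSucc, hH_le _, hi, ?_⟩
  have hs : Function.Surjective (c i.succ).subtype := fun x => ⟨⟨x, hi_succ ▸ mem_top x⟩, rfl⟩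
  obtain h_normal | h_ss := (hstep i).2
  · left
    simpa only [subgroupOf_map_subtype, inf_eq_left.2 (hstep i).1] using h_normal.map _ hs
  · right
    set K := ((c i.castSucc).subgroupOf (c i.succ)).normalCore
    have hK : (K.map (c i.succ).subtype).Normal := Normal.map inferInstance _ hs
    refine ⟨K.map (c i.succ).subtype, hK, map_le_iff_le_comap.2 (normalCore_le _), ?_⟩
    exact h_ss.of_surjective (QuotientGroup.map_surjective_of_surjective K _
      (c i.succ).subtype ((QuotientGroup.mk'_surjective _).comp hs) (le_comap_map _ K))

lemma IsKUSubnormal.sup_ssResidual_ne_top [Finite G] [Group.IsSolvable G] {H : Subgroup G}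
    (h : IsKUSubnormal H) (hH : H ≠ ⊤) : H ⊔ ssResidual G ≠ ⊤ := by
  obtain ⟨T, hHT, hT_top, hT | ⟨K, _, hKT, hK⟩⟩ := h.exists_ge hH
  · obtain ⟨S, _, hTS, hS_top, _⟩ := exists_normal_isCyclic_quotient hT_top
    exact ne_top_of_le_ne_top hS_top (sup_le (hHT.trans hTS) (ssResidual_le .of_isCyclic))
  · exact ne_top_of_le_ne_top hT_top (sup_le hHT ((ssResidual_le hK).trans hKT))

end MaximalChains

section Solvability

lemma isMulCommutative_of_isPGroup_of_chain {P : Type*} [Group P] [Finite P] {p : ℕ}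
    [Fact p.Prime] (hP : IsPGroup p P) (h : ∀ A B : Subgroup P, ⊥ < A → A < B → B = ⊤) :
    IsMulCommutative P := by
  by_contra hcomm
  rw [← center_eq_top_iff] at hcomm
  obtain ⟨x, -, hx⟩ := SetLike.exists_of_lt (Ne.lt_top hcomm)
  have : Nontrivial P := nontrivial_of_ne x 1 fun h => hx (h ▸ one_mem _)
  have center_lt : center P < centralizer {x} :=
    SetLike.lt_iff_le_and_exists.2
      ⟨center_le_centralizer _, x, mem_centralizer_singleton_iff.2 rfl, hx⟩
  have hcentralizer := h _ _ hP.bot_lt_center center_lt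
  exact hx (mem_center_iff.2 fun g => mem_centralizer_singleton_iff.1 (hcentralizer ▸ mem_top g))

lemma isCyclic_of_forall_eq_top {P : Type*} [Group P] (h : ∀ A : Subgroup P, ⊥ < A → A = ⊤) :
    IsCyclic P := by
  obtain _ | _ := subsingleton_or_nontrivial P
  · infer_instance
  obtain ⟨x, hx⟩ := exists_ne (1 : P)
  have hx_zpowers : ⊥ < zpowers x := bot_lt_iff_ne_bot.2 (mt zpowers_eq_bot.1 hx)
  exact isCyclic_iff_exists_zpowers_eq_top.2 ⟨x, h _ hx_zpowers⟩

variable {G : Type*} [Group G] [Finite G]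

lemma normalizer_le_centralizer_of_chain (P : Sylow (Nat.card G).minFac G)
    [Fact (Nat.card G).minFac.Prime] (hP : normalizer ((P : Subgroup G) : Set G) ≠ ⊤)
    (h : ∀ A B C : Subgroup G, ⊥ < A → A < B → B < C → C = ⊤) :
    normalizer ((P : Subgroup G) : Set G) ≤ centralizer ((P : Subgroup G) : Set G) := by
  have map_subtype_lt {A B : Subgroup P} (hAB : A < B) :
      A.map (P : Subgroup G).subtype < B.map (P : Subgroup G).subtype :=
    map_lt_map_iff_of_injective (subtype_injective _) |>.2 hAB
  have bot_lt_map {A : Subgroup P} (hA : ⊥ < A) : ⊥ < A.map (P : Subgroup G).subtype := by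
    simpa only [Subgroup.map_bot] using map_subtype_lt hA
  have map_lt {A : Subgroup P} (hA : A ≠ ⊤) : A.map (P : Subgroup G).subtype < P := by
    simpa only [← MonoidHom.range_eq_map, range_subtype] using map_subtype_lt hA.lt_top
  obtain hPN | hPN := (le_normalizer (H := (P : Subgroup G))).eq_or_lt
  · have : IsMulCommutative P := isMulCommutative_of_isPGroup_of_chain P.2 fun A B hA hAB => by
      by_contra hB
      exact hP (hPN ▸ h _ _ _ (bot_lt_map hA) (map_subtype_lt hAB) (map_lt hB))
    rw [← hPN]
    exact le_centralizer_iff_isMulCommutative.2 this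
  · have : IsCyclic P := isCyclic_of_forall_eq_top fun A hA => by
      by_contra hA_top
      exact hP (h _ _ _ (bot_lt_map hA) (map_lt hA_top) hPN)
    exact IsCyclic.normalizer_le_centralizer rfl this

lemma isSolvable_of_isSimpleGroup_of_chain [IsSimpleGroup G]
    (h : ∀ A B C : Subgroup G, ⊥ < A → A < B → B < C → C = ⊤) : Group.IsSolvable G := by
  have := Fact.mk (Nat.minFac_prime (Finite.one_lt_card (α := G)).ne')
  obtain ⟨P⟩ : Nonempty (Sylow (Nat.card G).minFac G) := inferInstance
  have hP_bot : (P : Subgroup G) ≠ ⊥ := P.ne_bot_of_dvd_card (Nat.minFac_dvd _)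
  by_cases hP_top : (P : Subgroup G) = ⊤
  · have hG : IsPGroup (Nat.card G).minFac G :=
      (hP_top ▸ P.2 : IsPGroup _ (⊤ : Subgroup G)).of_equiv topEquiv
    have := hG.isNilpotent
    infer_instance
  have hP_normalizer : normalizer ((P : Subgroup G) : Set G) ≠ ⊤ := fun hP =>
    (normalizer_eq_top_iff.1 hP).eq_bot_or_eq_top.elim hP_bot hP_top
  have hP_le := normalizer_le_centralizer_of_chain P hP_normalizer h
  have hcompl := MonoidHom.ker_transferSylow_isComplement' P hP_le
  obtain hker | hker := (MonoidHom.normal_ker (MonoidHom.transferSylow P hP_le)).eq_bot_or_eq_top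
  · exact absurd (isComplement'_bot_left.1 (hker ▸ hcompl)) hP_top
  · exact absurd (isComplement'_top_left.1 (hker ▸ hcompl)) hP_bot

lemma IsMinimalNonsupersoluble.isSolvable (hG : IsMinimalNonsupersoluble G)
    (h : ∀ H : Subgroup G, IsNMaximal 3 H → IsKUSubnormal H) : Group.IsSolvable G := by
  have : Nontrivial G := not_subsingleton_iff_nontrivial.1 fun _ => hG.1 .of_subsingleton
  obtain ⟨R, -, hR⟩ := Finite.exists_le_maximal
    (p := fun S : Subgroup G => S.Normal ∧ S ≠ ⊤) (a := ⊥) ⟨inferInstance, bot_ne_top⟩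
  have := hR.prop.1
  have := isSimpleGroup_quotient_of_maximal hR
  by_contra hG_not
  refine hG_not (hG.isSolvable_of_quotient hR.prop.2 ?_)
  refine isSolvable_of_isSimpleGroup_of_chain fun A B C hA hAB hBC => ?_
  by_contra hC
  have comap_lt {A B : Subgroup (G ⧸ R)} (hAB : A < B) :
      A.comap (QuotientGroup.mk' R) < B.comap (QuotientGroup.mk' R) :=
    (comap_lt_comap_of_surjective (QuotientGroup.mk'_surjective R)).2 hAB
  obtain ⟨H, hAH, hH_top, hH⟩ := exists_isNMaximal_three_ge (comap_lt hAB) (comap_lt hBC)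
    (by simpa only [comap_top] using comap_lt (Ne.lt_top hC))
  have hRH : R < H := by
    simpa only [MonoidHom.comap_bot, QuotientGroup.ker_mk'] using (comap_lt hA).trans_le hAH
  obtain ⟨T, hHT, hT_top, hT | ⟨K, _, hKT, hK⟩⟩ := (h H hH).exists_ge hH_top
  · exact hRH.not_ge (hHT.trans (hR.le_of_ge ⟨hT, hT_top⟩ (hRH.le.trans hHT)))
  · exact hG_not (hG.isSolvable_of_quotient (ne_top_of_le_ne_top hT_top hKT) hK.isSolvable)

end Solvability

section Frattini

variable {G : Type*} [Group G] [Finite G] {P H A : Subgroup G}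

lemma eq_top_of_lt_of_lt_of_sup_ssResidual_eq_top [Group.IsSolvable G]
    (h : ∀ H : Subgroup G, IsNMaximal 3 H → IsKUSubnormal H) (hH : H ⊔ ssResidual G = ⊤)
    {B C : Subgroup G} (hHB : H < B) (hBC : B < C) : C = ⊤ := by
  by_contra hC
  obtain ⟨M, hHM, hM_top, hM⟩ := exists_isNMaximal_three_ge hHB hBC (Ne.lt_top hC)
  exact (h M hM).sup_ssResidual_ne_top hM_top
    (top_le_iff.1 (hH.ge.trans (sup_le_sup_right hHM _)))

lemma prime_card_of_chain (hPH : Disjoint P H) (hAP : A ≤ P) [A.Normal] (hA : A ≠ ⊥)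
    (hHA_top : H ⊔ A ≠ ⊤) (hHA : IsSupersoluble (H ⊔ A : Subgroup G))
    (hchain : ∀ B C : Subgroup G, H < B → B < C → C = ⊤) : (Nat.card A).Prime := by
  obtain ⟨A₁, hA₁A, hA₁, hnorm⟩ := hHA.exists_prime_card_le_normalizer le_sup_right hA
  obtain rfl | hlt := hA₁A.eq_or_lt
  · exact hA₁
  have hH_lt : H < H ⊔ A₁ := by
    simpa only [sup_bot_eq] using sup_lt_sup_of_disjoint hPH
      (bot_lt_iff_ne_bot.2 (ne_bot_of_prime_card hA₁)) (hA₁A.trans hAP)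
      le_normalizer_of_normal
  exact absurd (hchain _ _ hH_lt (sup_lt_sup_of_disjoint hPH hlt hAP (le_sup_left.trans hnorm)))
    hHA_top

lemma IsMinimalNonsupersoluble.card_frattiniIn_eq_one_or_prime (hG : IsMinimalNonsupersoluble G)
    [P.Normal] (hHP : IsCompl H P)
    (hchain : ∀ B C : Subgroup G, H < B → B < C → C = ⊤) :
    Nat.card (frattiniIn P) = 1 ∨ (Nat.card (frattiniIn P)).Prime := by
  have : (frattiniIn P).Normal := inferInstanceAs ((frattini P).map P.subtype).Normal
  refine or_iff_not_imp_left.2 fun hA => ?_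
  have hA_bot : frattiniIn P ≠ ⊥ := mt card_eq_one.2 hA
  have hA_lt : frattiniIn P < P :=
    frattiniIn_lt (ne_bot_of_le_ne_bot hA_bot (map_subtype_le _))
  have hlt : H ⊔ frattiniIn P < ⊤ := by
    rw [← hHP.sup_eq_top]
    exact sup_lt_sup_of_disjoint hHP.disjoint.symm hA_lt le_rfl le_normalizer_of_normal
  exact prime_card_of_chain hHP.disjoint.symm hA_lt.le hA_bot hlt.ne
    (hG.2 _ hlt.ne) hchain

lemma card_le_of_isPGroup {t : ℕ} (ht : t.Prime) (hP : IsPGroup t P) (hAP : A ≤ P)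
    (hA : Nat.card A = 1 ∨ (Nat.card A).Prime) : Nat.card A ≤ t := by
  have := Fact.mk ht
  obtain hA | hA := hA
  · exact hA.trans_le ht.one_lt.le
  · obtain ⟨k, hk⟩ := (hP.to_le hAP).exists_card_eq
    exact ((Nat.prime_dvd_prime_iff_eq hA ht).1 (hA.dvd_of_dvd_pow hk.dvd)).le

end Frattini

/-- Let `G` be a minimal nonsupersoluble group in which every `3`-maximal subgroup is
`K`-`𝔘`-subnormal.  Then `|Φ(G^𝔘)|` is `1` or a prime; more precisely `G^𝔘` is a Sylow
`t`-subgroup for some prime `t` and `|Φ(G^𝔘)| ≤ t`. -/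
theorem frattini_ssResidual_small_of_3maximal_KUsubnormal
    (G : Type*) [Group G] [Finite G] (hG : IsMinimalNonsupersoluble G)
    (h : ∀ H : Subgroup G, IsNMaximal 3 H → IsKUSubnormal H) :
    (Nat.card (frattiniIn (ssResidual G)) = 1 ∨
      (Nat.card (frattiniIn (ssResidual G))).Prime) ∧
    ∃ t : ℕ, t.Prime ∧ IsSylowSubgroup t (ssResidual G) ∧
      Nat.card (frattiniIn (ssResidual G)) ≤ t := by
  have := hG.isSolvable h
  obtain ⟨t, ht, P, hP⟩ := hG.exists_sylow_eq_ssResidual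
  rw [← hP]
  have : (P : Subgroup G).Normal := hP ▸ normal_ssResidual
  obtain ⟨H, hH⟩ := exists_right_complement'_of_coprime P.card_coprime_index
  have hcard : Nat.card (frattiniIn (P : Subgroup G)) = 1 ∨
      (Nat.card (frattiniIn (P : Subgroup G))).Prime :=
    hG.card_frattiniIn_eq_one_or_prime hH.isCompl.symm fun B C =>
      eq_top_of_lt_of_lt_of_sup_ssResidual_eq_top h (hP ▸ hH.symm.sup_eq_top)
  exact ⟨hcard, t, ht.out, ⟨P.2, P.not_dvd_index⟩,
    card_le_of_isPGroup ht.out P.2 (map_subtype_le _) hcard⟩
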